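/- Let R be a Noetherian ring of finite Krull dimension d, and for a finitely generated R-module M, let a(M) denote the maximal rank of a free direct summand of M and ã(M) the maximal min-rank of a projective direct summand of M (min-rank = minimum over primes of the local rank). Then a(M) ≤ ã(M) ≤ a(M) + d. -/

import Mathlib

/-- The free rank of a module: the maximal rank of a free direct summand. -/
noncomputable def frk (R M : Type*) [CommRing R] [AddCommGroup M] [Module R M] : ℕ :=
  sSup {n : ℕ | ∃ N N' : Submodule R M, IsCompl N N' ∧ Nonempty (N ≃ₗ[R] (Fin n → R))}

/-- The maximal min-rank of a projective direct summand of a module, where the min-rank of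
a projective module is the minimum over all primes `P` of the rank of its localization at
`P` (as a module over the localized ring). -/
noncomputable def projMinRank (R M : Type*) [CommRing R] [AddCommGroup M] [Module R M] : ℕ :=
  sSup {n : ℕ | ∃ Ω N : Submodule R M, IsCompl Ω N ∧ Module.Projective R Ω ∧
    ∀ (P : Ideal R) (hP : P.IsPrime),
      n ≤ Module.finrank (Localization (@Ideal.primeCompl R _ P hP))
        (LocalizedModule (@Ideal.primeCompl R _ P hP) Ω)}

/-!
The upper bound is Serre's splitting theorem. A finitely generated projective module is the image
of an idempotent matrix over `R`, and its rank at a prime `p` is the rank of that matrix over the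
residue field `κ(p)`. Call a matrix with `m` rows basic if this rank is at least
`min m (dim R/p + 1)` for all `p`. One row of a basic matrix can be eliminated by projecting
`R^m` to `R^(m - 1)` along a vector `v` with `v 0 = 1`: every fibre rank drops by at most one, and
a drop is harmful only at the finitely many primes where the rank is less than `m` and exactly
`dim R/p + 1`. There prime avoidance provides a `v` outside the column space, so that the rank does
not drop. The last remaining row generates the unit ideal, so the projective module maps onto `R`.
Each such splitting lowers all ranks by one, and it can be repeated as long as the min-rank
exceeds `d`.
-/

open TopologicalSpace
open scoped Matrix

section Field

variable {K : Type*} [Field K]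

lemma exists_linearIndependent_rows {m n : Type*} [Finite m] [Fintype n] (A : Matrix m n K)
    {k : ℕ} (hk : A.rank = k) :
    ∃ r : Fin k → m, LinearIndependent K (A.submatrix r id).row := by
  rw [Matrix.rank_eq_finrank_span_row] at hk
  subst hk
  obtain ⟨f, hfA, -, hf⟩ := Submodule.exists_fun_fin_finrank_span_eq K (Set.range A.row)
  choose r hr using hfA
  obtain rfl : (A.submatrix r id).row = f := funext hr
  exact ⟨r, hf⟩

lemma exists_submatrix_det_ne_zero {m n : Type*} [Finite m] [Fintype n] (A : Matrix m n K) :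
    ∃ (r : Fin A.rank → m) (c : Fin A.rank → n), (A.submatrix r c).det ≠ 0 := by
  obtain ⟨r, hr⟩ := exists_linearIndependent_rows A rfl
  have hrank : (A.submatrix r id)ᵀ.rank = A.rank := by
    rw [Matrix.rank_transpose, hr.rank_matrix, Fintype.card_fin]
  obtain ⟨c, hc⟩ := exists_linearIndependent_rows _ hrank
  refine ⟨r, c, ?_⟩
  rw [← Matrix.det_transpose]
  exact ((Matrix.isUnit_iff_isUnit_det _).mp
    (Matrix.linearIndependent_rows_iff_isUnit.mp hc)).ne_zero

lemma exists_vecMul_eq_zero_of_rank_lt {m n : Type*} [Fintype m] [Fintype n] {A : Matrix m n K}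
    (hA : A.rank < Fintype.card m) : ∃ c ≠ 0, c ᵥ* A = 0 := by
  by_contra! hc
  have hrows : LinearIndependent K A.row := by
    rw [← Matrix.vecMul_injective_iff, ← Matrix.coe_vecMulLinear, injective_iff_map_eq_zero]
    exact fun c hcA => by_contra fun hc₀ => hc c hc₀ hcA
  exact hA.ne hrows.rank_matrix

lemma rank_mul_add_finrank_inf {l m n : Type*} [Fintype m] [Fintype n]
    (B : Matrix l m K) (A : Matrix m n K) :
    (B * A).rank +
      Module.finrank K ↥(LinearMap.range A.mulVecLin ⊓ LinearMap.ker B.mulVecLin) = A.rank := by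
  rw [Matrix.rank, Matrix.rank, Matrix.mulVecLin_mul,
    ← LinearMap.finrank_range_add_finrank_ker
      (B.mulVecLin.domRestrict (LinearMap.range A.mulVecLin)),
    LinearMap.range_domRestrict, LinearMap.range_comp, LinearMap.ker_domRestrict,
    ← Submodule.finrank_map_subtype_eq, Submodule.map_comap_subtype]

end Field

section PrimeAvoidance

variable {R : Type*} [CommRing R]

lemma finite_setOf_minimal_mem [NoetherianSpace (PrimeSpectrum R)] {Z : Set (PrimeSpectrum R)}
    (hZ : IsClosed Z) : {p | Minimal (· ∈ Z) p}.Finite := by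
  obtain ⟨S, hS, hclosed, hirr, rfl⟩ := NoetherianSpace.exists_finite_set_isClosed_irreducible hZ
  refine Set.Finite.of_injOn (f := fun p => closure {p}) ?_
    (fun p _ q _ h => (inseparable_iff_closure_eq.mpr h).eq) hS
  rintro p ⟨⟨T, hT, hpT⟩, hmin⟩
  obtain ⟨g, hg⟩ := QuasiSober.sober (hirr T hT) (hclosed T hT)
  have hgp : g ≤ p := (PrimeSpectrum.le_iff_specializes g p).mpr (hg.specializes hpT)
  obtain rfl : g = p := le_antisymm hgp (hmin ⟨T, hT, hg.mem⟩ hgp)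
  rw [← hg.def] at hT
  exact hT

lemma exists_notMem_forall_mem {S : Finset (PrimeSpectrum R)} {p : PrimeSpectrum R}
    (h : ∀ q ∈ S, ¬ q ≤ p) : ∃ r ∉ p.asIdeal, ∀ q ∈ S, r ∈ q.asIdeal := by
  have hinf : ¬ S.inf PrimeSpectrum.asIdeal ≤ p.asIdeal := fun hle => by
    obtain ⟨q, hq, hqp⟩ := (Ideal.IsPrime.inf_le' p.isPrime).mp hle
    exact h q hq hqp
  obtain ⟨r, hr, hrp⟩ := SetLike.not_le_iff_exists.mp hinf
  exact ⟨r, hrp, fun q hq => (Finset.inf_le hq : _ ≤ q.asIdeal) hr⟩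

lemma exists_ne_apply_ne_zero_of_dotProduct_eq_zero {S ι : Type*} [NonAssocSemiring S]
    [Fintype ι] {c v : ι → S} (hc : c ≠ 0) {i₀ : ι} (hv : v i₀ = 1) (hcv : c ⬝ᵥ v = 0) :
    ∃ i ≠ i₀, c i ≠ 0 := by
  by_contra! hzero
  rw [dotProduct, Fintype.sum_eq_single i₀ fun i hi => by rw [hzero i hi, zero_mul], hv,
    mul_one] at hcv
  refine hc (funext fun i => ?_)
  obtain rfl | hi := eq_or_ne i i₀
  exacts [hcv, hzero i hi]

lemma dotProduct_map_add_single {S T ι : Type*} [NonAssocSemiring S] [NonAssocSemiring T]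
    [Fintype ι] [DecidableEq ι] (φ : S →+* T) (c : ι → T) (v : ι → S) (i : ι) (r : S) :
    c ⬝ᵥ (φ ∘ (v + Pi.single i r)) = c ⬝ᵥ (φ ∘ v) + c i * φ r := by
  rw [← dotProduct_single, ← dotProduct_add]
  refine congrArg (c ⬝ᵥ ·) (funext fun j => ?_)
  rw [Function.comp_apply, Pi.add_apply, map_add,
    Pi.apply_single (fun _ => φ) (fun _ => map_zero φ)]
  rfl

lemma exists_forall_dotProduct_ne_zero {ι : Type*} [Fintype ι]
    (c : ∀ p : PrimeSpectrum R, ι → p.asIdeal.ResidueField) (i₀ : ι)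
    (S : Finset (PrimeSpectrum R)) (hc : ∀ p ∈ S, c p ≠ 0) :
    ∃ v : ι → R, v i₀ = 1 ∧
      ∀ p ∈ S, c p ⬝ᵥ (algebraMap R p.asIdeal.ResidueField ∘ v) ≠ 0 := by
  classical
  induction S using Finset.strongInduction with
  | H S ih =>
    obtain rfl | hne := S.eq_empty_or_nonempty
    · exact ⟨1, rfl, by simp⟩
    obtain ⟨p, hpS, hpmin⟩ := S.exists_minimal hne
    obtain ⟨v, hv₀, hv⟩ := ih (S.erase p) (Finset.erase_ssubset hpS)
      fun q hq => hc q (Finset.mem_of_mem_erase hq)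
    rw [← Finset.insert_erase hpS]
    simp only [Finset.forall_mem_insert]
    by_cases hvp : c p ⬝ᵥ (algebraMap R p.asIdeal.ResidueField ∘ v) = 0
    swap
    · exact ⟨v, hv₀, hvp, hv⟩
    obtain ⟨i, hi₀, hi⟩ := exists_ne_apply_ne_zero_of_dotProduct_eq_zero (hc p hpS)
      (by rw [Function.comp_apply, hv₀, map_one] :
        (algebraMap R p.asIdeal.ResidueField ∘ v) i₀ = 1) hvp
    obtain ⟨r, hrp, hr⟩ : ∃ r ∉ p.asIdeal, ∀ q ∈ S.erase p, r ∈ q.asIdeal :=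
      exists_notMem_forall_mem fun q hq hqp => Finset.ne_of_mem_erase hq
        (hqp.antisymm (hpmin (Finset.mem_of_mem_erase hq) hqp))
    refine ⟨v + Pi.single i r, by simp [hv₀, hi₀.symm], ?_, fun q hq => ?_⟩
    · rw [dotProduct_map_add_single, hvp, zero_add]
      exact mul_ne_zero hi (Ideal.algebraMap_residueField_eq_zero.not.mpr hrp)
    · rw [dotProduct_map_add_single, Ideal.algebraMap_residueField_eq_zero.mpr (hr q hq),
        mul_zero, add_zero]
      exact hv q hq

end PrimeAvoidance

section Projection

variable {R K : Type*} [CommRing R] [Field K]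

/-- The matrix of the projection `R^(n+1) → R^n` which forgets the `0`-th coordinate after
subtracting `w 0 • v` from `w`. If `v 0 = 1`, its kernel is spanned by `v`. -/
def projAlong {n : ℕ} (v : Fin (n + 1) → R) : Matrix (Fin n) (Fin (n + 1)) R :=
  Matrix.of fun i => Fin.cons (-v i.succ) (Pi.single i 1)

lemma projAlong_mulVec_apply {n : ℕ} (v w : Fin (n + 1) → R) (i : Fin n) :
    (projAlong v *ᵥ w) i = w i.succ - w 0 * v i.succ := by
  simp only [projAlong, Matrix.mulVec, dotProduct, Matrix.of_apply, Fin.sum_univ_succ,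
    Fin.cons_zero, Fin.cons_succ, Pi.single_apply, ite_mul, one_mul, zero_mul,
    Finset.sum_ite_eq', Finset.mem_univ, if_true]
  ring

lemma projAlong_map {S : Type*} [CommRing S] (φ : R →+* S) {n : ℕ} (v : Fin (n + 1) → R) :
    (projAlong v).map φ = projAlong (φ ∘ v) := by
  ext i j
  cases j using Fin.cases with
  | zero => simp [projAlong]
  | succ j => simpa [projAlong] using Pi.apply_single (fun _ => φ) (fun _ => map_zero φ) i 1 j

lemma ker_projAlong_le_span {n : ℕ} {v : Fin (n + 1) → R} (hv : v 0 = 1) :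
    LinearMap.ker (projAlong v).mulVecLin ≤ Submodule.span R {v} := by
  intro w hw
  refine Submodule.mem_span_singleton.mpr ⟨w 0, funext (Fin.cases ?_ fun i => ?_)⟩
  · simp [hv]
  · have hwi := congrFun (LinearMap.mem_ker.mp hw) i
    rw [Matrix.mulVecLin_apply, projAlong_mulVec_apply] at hwi
    exact (sub_eq_zero.mp hwi).symm

lemma rank_le_rank_projAlong_mul_add_one {n : ℕ} {κ : Type*} [Fintype κ] {v : Fin (n + 1) → K}
    (hv : v 0 = 1) (A : Matrix (Fin (n + 1)) κ K) : A.rank ≤ (projAlong v * A).rank + 1 := by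
  rw [← rank_mul_add_finrank_inf (projAlong v) A, add_le_add_iff_left]
  exact (Submodule.finrank_mono (inf_le_right.trans (ker_projAlong_le_span hv))).trans
    ((finrank_span_le_card {v}).trans_eq (by simp))

lemma rank_projAlong_mul_of_vecMul_eq_zero {n : ℕ} {κ : Type*} [Fintype κ] {v : Fin (n + 1) → K}
    (hv : v 0 = 1) {A : Matrix (Fin (n + 1)) κ K} {c : Fin (n + 1) → K} (hcA : c ᵥ* A = 0)
    (hcv : c ⬝ᵥ v ≠ 0) : (projAlong v * A).rank = A.rank := by
  rw [← rank_mul_add_finrank_inf (projAlong v) A, left_eq_add, Submodule.finrank_eq_zero,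
    eq_bot_iff]
  rintro _ ⟨⟨y, rfl⟩, hy⟩
  obtain ⟨a, ha⟩ := Submodule.mem_span_singleton.mp (ker_projAlong_le_span hv hy)
  have hav : a * (c ⬝ᵥ v) = 0 := by
    rw [← smul_eq_mul, ← dotProduct_smul, ha, Matrix.mulVecLin_apply, Matrix.dotProduct_mulVec,
      hcA, zero_dotProduct]
  rw [Submodule.mem_bot, ← ha, (mul_eq_zero.mp hav).resolve_right hcv, zero_smul]

end Projection

section BasicMatrix

variable {R : Type*} [CommRing R]

/-- The rank at the prime `p` of a matrix over `R`, i.e. the rank of its reduction to the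
residue field `κ(p)`. -/
noncomputable def fibreRank {m n : Type*} [Fintype n] (A : Matrix m n R) (p : PrimeSpectrum R) :
    ℕ :=
  (A.map (algebraMap R p.asIdeal.ResidueField)).rank

lemma lowerSemicontinuous_fibreRank {m n : Type*} [Finite m] [Fintype n] (A : Matrix m n R) :
    LowerSemicontinuous (fibreRank A) := by
  intro p t ht
  obtain ⟨r, c, hdet⟩ :=
    exists_submatrix_det_ne_zero (A.map (algebraMap R p.asIdeal.ResidueField))
  have det_ne_zero_iff (q : PrimeSpectrum R) :
      ((A.map (algebraMap R q.asIdeal.ResidueField)).submatrix r c).det ≠ 0 ↔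
        q ∈ PrimeSpectrum.basicOpen (A.submatrix r c).det := by
    rw [PrimeSpectrum.mem_basicOpen, ← Ideal.algebraMap_residueField_eq_zero, RingHom.map_det]
    rfl
  filter_upwards [(PrimeSpectrum.basicOpen _).isOpen.mem_nhds ((det_ne_zero_iff p).mp hdet)]
    with q hq
  calc t < fibreRank A p := ht
    _ = ((A.map (algebraMap R q.asIdeal.ResidueField)).submatrix r c).rank := by
      rw [Matrix.rank_of_det_ne_zero ((det_ne_zero_iff q).mpr hq), Fintype.card_fin, fibreRank]
    _ ≤ fibreRank A q := Matrix.rank_submatrix_le _ r c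

lemma fibreRank_projAlong_mul {n : ℕ} {κ : Type*} [Fintype κ] (v : Fin (n + 1) → R)
    (A : Matrix (Fin (n + 1)) κ R) (p : PrimeSpectrum R) :
    fibreRank (projAlong v * A) p =
      (projAlong (algebraMap R p.asIdeal.ResidueField ∘ v) *
        A.map (algebraMap R p.asIdeal.ResidueField)).rank := by
  rw [fibreRank, Matrix.map_mul, projAlong_map]

/-- A matrix with `m` rows is basic if its rank at every prime `p` is at least
`min m (dim R/p + 1)`. This is the condition of Eisenbud and Evans on the rows of the matrix; the
dimension of `R/p` is the coheight of `p` in the spectrum. -/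
def IsBasicMatrix {m : ℕ} {n : Type*} [Fintype n] (A : Matrix (Fin m) n R) : Prop :=
  ∀ p : PrimeSpectrum R, min (m : ℕ∞) (Order.coheight p + 1) ≤ fibreRank A p

lemma IsBasicMatrix.finite_setOf_fibreRank_eq [NoetherianSpace (PrimeSpectrum R)] {m : ℕ}
    {n : Type*} [Fintype n] {A : Matrix (Fin m) n R} (hA : IsBasicMatrix A) :
    {p | fibreRank A p < m ∧ (fibreRank A p : ℕ∞) = Order.coheight p + 1}.Finite := by
  have hclosed (t : ℕ) : IsClosed {p | fibreRank A p ≤ t} :=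
    (lowerSemicontinuous_fibreRank A).isClosed_preimage t
  refine ((Set.finite_Iio m).biUnion fun t _ => finite_setOf_minimal_mem (hclosed t)).subset ?_
  rintro p ⟨hlt, heq⟩
  refine Set.mem_biUnion (Set.mem_Iio.mpr hlt) ⟨le_refl (fibreRank A p), fun q hq hqp => ?_⟩
  by_contra hpq
  -- A prime strictly below `p` has larger coheight, which forces a larger fibre rank.
  have hcoheight : Order.coheight p + 1 < Order.coheight q + 1 := by
    refine (ENat.add_lt_add_iff_right ENat.one_ne_top).mpr
      (Order.coheight_strictAnti (lt_of_le_not_ge hqp hpq) ?_)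
    refine lt_top_iff_ne_top.mpr fun htop => ?_
    simp [htop] at heq
  have hlt' : (fibreRank A p : ℕ∞) < min (m : ℕ∞) (Order.coheight q + 1) :=
    lt_min (by exact_mod_cast hlt) (heq ▸ hcoheight)
  exact absurd (hlt'.trans_le (hA q)) (by exact_mod_cast hq.not_gt)

lemma IsBasicMatrix.exists_projAlong_mul [NoetherianSpace (PrimeSpectrum R)] {n : ℕ} {κ : Type*}
    [Fintype κ] {A : Matrix (Fin (n + 1)) κ R} (hA : IsBasicMatrix A) :
    ∃ v : Fin (n + 1) → R, IsBasicMatrix (projAlong v * A) := by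
  have exists_c (p : PrimeSpectrum R) (hp : fibreRank A p < n + 1) :
      ∃ c ≠ 0, c ᵥ* A.map (algebraMap R p.asIdeal.ResidueField) = 0 :=
    exists_vecMul_eq_zero_of_rank_lt (hp.trans_eq (Fintype.card_fin _).symm)
  choose! c hc hcA using exists_c
  -- `c p` vanishes on the column space at `p`, which therefore does not contain `v` if
  -- `c p ⬝ᵥ v ≠ 0`.
  obtain ⟨v, hv₀, hv⟩ := exists_forall_dotProduct_ne_zero c 0
    hA.finite_setOf_fibreRank_eq.toFinset fun p hp => hc p ((Set.Finite.mem_toFinset _).mp hp).1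
  refine ⟨v, fun p => ?_⟩
  have hv₀' : (algebraMap R p.asIdeal.ResidueField ∘ v) 0 = 1 := by
    rw [Function.comp_apply, hv₀, map_one]
  by_cases hp : fibreRank A p < n + 1 ∧ (fibreRank A p : ℕ∞) = Order.coheight p + 1
  · have hrank : fibreRank (projAlong v * A) p = fibreRank A p := by
      rw [fibreRank_projAlong_mul]
      exact rank_projAlong_mul_of_vecMul_eq_zero hv₀' (hcA p hp.1)
        (hv p ((Set.Finite.mem_toFinset _).mpr hp))
    exact (min_le_right _ _).trans (hrank ▸ hp.2.ge)
  · have hrank : fibreRank A p ≤ fibreRank (projAlong v * A) p + 1 := by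
      rw [fibreRank_projAlong_mul]
      exact rank_le_rank_projAlong_mul_add_one hv₀' _
    refine (ENat.add_le_add_iff_right ENat.one_ne_top).mp
      (le_trans ?_ (by exact_mod_cast hrank : (fibreRank A p : ℕ∞) ≤ _ + 1))
    obtain hfull | hlt := le_or_gt (n + 1) (fibreRank A p)
    · exact (add_le_add_left (min_le_left _ _) 1).trans (by exact_mod_cast hfull)
    · have hle : Order.coheight p + 1 ≤ fibreRank A p :=
        (min_le_iff.mp (hA p)).resolve_left (by exact_mod_cast hlt.not_ge)
      exact (add_le_add_left (min_le_right _ _) 1).trans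
        (Order.add_one_le_of_lt (hle.lt_of_ne' fun h => hp ⟨hlt, h⟩))

lemma IsBasicMatrix.exists_dotProduct_mulVec_eq_one [NoetherianSpace (PrimeSpectrum R)] {n : ℕ}
    {κ : Type*} [Fintype κ] {A : Matrix (Fin (n + 1)) κ R} (hA : IsBasicMatrix A) :
    ∃ (x : Fin (n + 1) → R) (y : κ → R), x ⬝ᵥ A *ᵥ y = 1 := by
  induction n with
  | zero =>
    have hspan : Ideal.span (Set.range (A 0)) = ⊤ := by
      by_contra hne
      obtain ⟨P, hP, hle⟩ := Ideal.exists_le_maximal _ hne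
      have hmap : A.map (algebraMap R P.ResidueField) = 0 := by
        ext i j
        rw [Fin.fin_one_eq_zero i]
        exact Ideal.algebraMap_residueField_eq_zero.mpr (hle (Ideal.subset_span ⟨j, rfl⟩))
      have hrank := hA ⟨P, hP.isPrime⟩
      simp [fibreRank, hmap] at hrank
    obtain ⟨y, hy⟩ := Ideal.mem_span_range_iff_exists_fun.mp ((Ideal.eq_top_iff_one _).mp hspan)
    refine ⟨1, y, ?_⟩
    simpa [dotProduct, Matrix.mulVec, mul_comm] using hy
  | succ n ih =>
    obtain ⟨v, hv⟩ := hA.exists_projAlong_mul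
    obtain ⟨x, y, hxy⟩ := ih hv
    refine ⟨x ᵥ* projAlong v, y, ?_⟩
    rw [← Matrix.dotProduct_mulVec, Matrix.mulVec_mulVec, hxy]

end BasicMatrix

section Serre

variable {R : Type*} [CommRing R]

lemma fibreRank_toMatrix'_comp {P : Type*} [AddCommGroup P] [Module R P] {m : ℕ}
    {f : (Fin m → R) →ₗ[R] P} {s : P →ₗ[R] Fin m → R} (hfs : f ∘ₗ s = LinearMap.id)
    (p : PrimeSpectrum R) :
    fibreRank (LinearMap.toMatrix' (s ∘ₗ f)) p = Module.rankAtStalk P p := by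
  have : Module.Projective R P := .of_split s f hfs
  have : Module.Finite R P :=
    .of_surjective f (Function.RightInverse.surjective (LinearMap.congr_fun hfs))
  have hcomp : f.baseChange p.asIdeal.ResidueField ∘ₗ s.baseChange p.asIdeal.ResidueField =
      LinearMap.id := by
    rw [← LinearMap.baseChange_comp, hfs, LinearMap.baseChange_id]
  have hinj : Function.Injective (s.baseChange p.asIdeal.ResidueField) :=
    Function.LeftInverse.injective (LinearMap.congr_fun hcomp)
  have hsurj : Function.Surjective (f.baseChange p.asIdeal.ResidueField) :=
    Function.RightInverse.surjective (LinearMap.congr_fun hcomp)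
  let b := Algebra.TensorProduct.basis p.asIdeal.ResidueField (Pi.basisFun R (Fin m))
  rw [fibreRank, ← LinearMap.toMatrix_eq_toMatrix', ← LinearMap.toMatrix_baseChange,
    Matrix.rank_eq_finrank_range_toLin _ b b, Matrix.toLin_toMatrix, LinearMap.baseChange_comp,
    LinearMap.range_comp_of_range_eq_top _ (LinearMap.range_eq_top.mpr hsurj),
    LinearMap.finrank_range_of_inj hinj, Module.rankAtStalk_eq]

lemma nonempty_ker_prod_linearEquiv {P : Type*} [AddCommGroup P] [Module R P] {g : P →ₗ[R] R}
    {x : P} (hgx : g x = 1) : Nonempty ((LinearMap.ker g × R) ≃ₗ[R] P) :=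
  ⟨lequivProdOfRightSplitExact (LinearMap.ker g).injective_subtype
    (g := g) (f := LinearMap.toSpanSingleton R P x)
    (by rw [Submodule.range_subtype]) (by ext; simpa using hgx)⟩

variable [NoetherianSpace (PrimeSpectrum R)]

lemma exists_linearMap_apply_eq_one {P : Type*} [AddCommGroup P] [Module R P]
    [Module.Projective R P] [Module.Finite R P]
    (hP : ∀ p : PrimeSpectrum R, Order.coheight p + 1 ≤ Module.rankAtStalk P p) :
    ∃ (g : P →ₗ[R] R) (x : P), g x = 1 := by
  obtain _ | _ := subsingleton_or_nontrivial R
  · exact ⟨0, 0, Subsingleton.elim _ _⟩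
  obtain ⟨m, f, hf⟩ := Module.Finite.exists_fin' R P
  obtain ⟨s, hs⟩ := Module.projective_lifting_property f LinearMap.id hf
  have hbasic : IsBasicMatrix (LinearMap.toMatrix' (s ∘ₗ f)) := fun p => by
    rw [fibreRank_toMatrix'_comp hs]
    exact (min_le_right _ _).trans (hP p)
  cases m with
  | zero =>
    obtain ⟨p⟩ := (inferInstance : Nonempty (PrimeSpectrum R))
    have hrank := hP p
    rw [← fibreRank_toMatrix'_comp hs, fibreRank,
      Nat.eq_zero_of_le_zero (Matrix.rank_le_height _)] at hrank
    simp at hrank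
  | succ n =>
    obtain ⟨x, y, hxy⟩ := hbasic.exists_dotProduct_mulVec_eq_one
    refine ⟨dotProductBilin R R x ∘ₗ s, f y, ?_⟩
    rwa [LinearMap.toMatrix'_mulVec] at hxy

lemma exists_linearMap_comp_eq_id (k : ℕ) {P : Type*} [AddCommGroup P] [Module R P]
    [Module.Projective R P] [Module.Finite R P]
    (hP : ∀ p : PrimeSpectrum R, Order.coheight p + k ≤ Module.rankAtStalk P p) :
    ∃ (i : (Fin k → R) →ₗ[R] P) (π : P →ₗ[R] Fin k → R), π ∘ₗ i = LinearMap.id := by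
  induction k generalizing P with
  | zero => exact ⟨0, 0, Subsingleton.elim _ _⟩
  | succ k ih =>
    obtain ⟨g, x, hgx⟩ := exists_linearMap_apply_eq_one fun p => by
      refine le_trans ?_ (hP p)
      gcongr
      exact_mod_cast Nat.le_add_left 1 k
    obtain ⟨e⟩ := nonempty_ker_prod_linearEquiv hgx
    let ρ : P →ₗ[R] LinearMap.ker g := LinearMap.fst R _ R ∘ₗ e.symm.toLinearMap
    have hρ : ρ ∘ₗ e.toLinearMap ∘ₗ LinearMap.inl R _ R = LinearMap.id := by ext; simp [ρ]
    have : Module.Projective R (LinearMap.ker g) := .of_split _ ρ hρ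
    have : Module.Finite R (LinearMap.ker g) :=
      .of_surjective ρ (Function.RightInverse.surjective (LinearMap.congr_fun hρ))
    have hker (p : PrimeSpectrum R) :
        Order.coheight p + k ≤ Module.rankAtStalk (LinearMap.ker g) p := by
      have := p.nontrivial
      have hp := hP p
      rw [← Module.rankAtStalk_eq_of_equiv e, Module.rankAtStalk_prod, Pi.add_apply,
        Module.rankAtStalk_self] at hp
      push_cast at hp
      rw [← add_assoc] at hp
      exact (ENat.add_le_add_iff_right ENat.one_ne_top).mp hp
    obtain ⟨i, π, hπi⟩ := ih hker
    let E : ((Fin k → R) × R) ≃ₗ[R] (Fin (k + 1) → R) :=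
      LinearEquiv.prodComm R _ _ ≪≫ₗ Fin.consLinearEquiv R fun _ => R
    refine ⟨e.toLinearMap ∘ₗ i.prodMap LinearMap.id ∘ₗ E.symm.toLinearMap,
      E.toLinearMap ∘ₗ π.prodMap LinearMap.id ∘ₗ e.symm.toLinearMap, LinearMap.ext fun v => ?_⟩
    simp [← LinearMap.comp_apply π i, hπi]

end Serre

section Summand

/-- `M` has a direct summand which is free of rank `n`. -/
def HasFreeSummand (R M : Type*) [CommRing R] [AddCommGroup M] [Module R M] (n : ℕ) : Prop :=
  ∃ N N' : Submodule R M, IsCompl N N' ∧ Nonempty (N ≃ₗ[R] (Fin n → R))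

/-- `M` has a projective direct summand of min-rank at least `n`, i.e. of rank at least `n` at
every prime. -/
def HasProjectiveSummand (R M : Type*) [CommRing R] [AddCommGroup M] [Module R M] (n : ℕ) : Prop :=
  ∃ Ω N : Submodule R M, IsCompl Ω N ∧ Module.Projective R Ω ∧
    ∀ p : PrimeSpectrum R, n ≤ Module.rankAtStalk Ω p

variable {R M : Type*} [CommRing R] [AddCommGroup M] [Module R M] {n : ℕ}

lemma frk_eq_sSup : frk R M = sSup {n | HasFreeSummand R M n} := rfl

lemma projMinRank_eq_sSup : projMinRank R M = sSup {n | HasProjectiveSummand R M n} :=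
  congrArg sSup (Set.ext fun _ => exists₂_congr fun _ _ => and_congr_right fun _ =>
    and_congr_right fun _ => ⟨fun h p => h p.asIdeal p.isPrime, fun h P hP => h ⟨P, hP⟩⟩)

lemma hasFreeSummand_of_comp_eq_id {i : (Fin n → R) →ₗ[R] M} {π : M →ₗ[R] Fin n → R}
    (h : π ∘ₗ i = LinearMap.id) : HasFreeSummand R M n := by
  have hi : Function.Injective i := Function.LeftInverse.injective (LinearMap.congr_fun h)
  refine ⟨LinearMap.range i, _, LinearMap.isCompl_of_proj (f := i.rangeRestrict ∘ₗ π) ?_,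
    ⟨(LinearEquiv.ofInjective i hi).symm⟩⟩
  rintro ⟨_, x, rfl⟩
  exact congrArg i.rangeRestrict (LinearMap.congr_fun h x)

lemma hasFreeSummand_zero : HasFreeSummand R M 0 :=
  hasFreeSummand_of_comp_eq_id (i := 0) (π := 0) (Subsingleton.elim _ _)

lemma HasFreeSummand.hasProjectiveSummand (h : HasFreeSummand R M n) :
    HasProjectiveSummand R M n := by
  obtain ⟨N, N', hN, ⟨e⟩⟩ := h
  have : Module.Free R N := .of_equiv e.symm
  have : Module.Finite R N := .equiv e.symm
  refine ⟨N, N', hN, inferInstance, fun p => ?_⟩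
  have := p.nontrivial
  rw [Module.rankAtStalk_eq_finrank_of_free, Pi.natCast_apply, e.finrank_eq, Module.finrank_fin_fun]
  rfl

lemma rankAtStalk_le_of_surjective [Module.Finite R M] {N : Type*} [AddCommGroup N] [Module R N]
    {f : M →ₗ[R] N} (hf : Function.Surjective f) (p : PrimeSpectrum R) :
    Module.rankAtStalk N p ≤ Module.rankAtStalk M p :=
  LinearMap.finrank_le_finrank_of_surjective
    (f := LocalizedModule.map p.asIdeal.primeCompl f)
    (LocalizedModule.map_surjective p.asIdeal.primeCompl f hf)

lemma bddAbove_hasProjectiveSummand [Nontrivial R] [Module.Finite R M] :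
    BddAbove {n | HasProjectiveSummand R M n} := by
  obtain ⟨p⟩ := (inferInstance : Nonempty (PrimeSpectrum R))
  refine ⟨Module.rankAtStalk M p, ?_⟩
  rintro n ⟨Ω, N, hΩ, -, hrank⟩
  exact (hrank p).trans (rankAtStalk_le_of_surjective (Submodule.projectionOnto_surjective hΩ) p)

lemma HasProjectiveSummand.hasFreeSummand [NoetherianSpace (PrimeSpectrum R)] [Module.Finite R M]
    {d : ℕ} (hd : ringKrullDim R ≤ d) (h : HasProjectiveSummand R M (n + d)) :
    HasFreeSummand R M n := by
  obtain ⟨Ω, N, hΩ, hproj, hrank⟩ := h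
  have : Module.Finite R Ω := .of_surjective _ (Submodule.projectionOnto_surjective hΩ)
  have hcoheight (p : PrimeSpectrum R) : Order.coheight p + n ≤ Module.rankAtStalk Ω p := by
    have hp : Order.coheight p ≤ d :=
      WithBot.coe_le_coe.mp ((Order.coheight_le_krullDim p).trans hd)
    calc Order.coheight p + n ≤ d + n := by gcongr
      _ ≤ Module.rankAtStalk Ω p := by exact_mod_cast (add_comm d n).trans_le (hrank p)
  obtain ⟨i, π, hπi⟩ := exists_linearMap_comp_eq_id n hcoheight
  refine hasFreeSummand_of_comp_eq_id (i := Ω.subtype ∘ₗ i)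
    (π := π ∘ₗ Submodule.projectionOnto Ω N hΩ) (LinearMap.ext fun v => ?_)
  simpa using LinearMap.congr_fun hπi v

end Summand

theorem frk_le_projMinRank_le_general {R : Type*} [CommRing R]
    [NoetherianSpace (PrimeSpectrum R)] (d : ℕ) (hd : ringKrullDim R = d) (M : Type*)
    [AddCommGroup M] [Module R M] [Module.Finite R M] :
    frk R M ≤ projMinRank R M ∧ projMinRank R M ≤ frk R M + d := by
  have : Nontrivial R := by
    by_contra hR
    rw [not_nontrivial_iff_subsingleton] at hR
    exact WithBot.bot_ne_coe (ringKrullDim_eq_bot_of_subsingleton.symm.trans hd)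
  have hsub : {n | HasFreeSummand R M n} ⊆ {n | HasProjectiveSummand R M n} :=
    fun n hn => hn.hasProjectiveSummand
  have hbdd : BddAbove {n | HasProjectiveSummand R M n} := bddAbove_hasProjectiveSummand
  rw [frk_eq_sSup, projMinRank_eq_sSup]
  refine ⟨csSup_le_csSup hbdd ⟨0, hasFreeSummand_zero⟩ hsub,
    csSup_le ⟨0, hsub hasFreeSummand_zero⟩ fun n hn => ?_⟩
  obtain hnd | hdn := le_total n d
  · exact hnd.trans (Nat.le_add_left d _)
  · obtain ⟨m, rfl⟩ := Nat.exists_eq_add_of_le' hdn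
    exact Nat.add_le_add_right (le_csSup (hbdd.mono hsub) (hn.hasFreeSummand hd.le)) d

/-- For a Noetherian ring of finite Krull dimension `d` and a finitely generated module `M`,
the maximal rank `a(M)` of a free direct summand and the maximal min-rank `ã(M)` of a
projective direct summand satisfy `a(M) ≤ ã(M) ≤ a(M) + d`. -/
theorem frk_le_projMinRank_le {R : Type*} [CommRing R] [IsNoetherianRing R] (d : ℕ)
    (hd : ringKrullDim R = d) (M : Type*) [AddCommGroup M] [Module R M]
    [Module.Finite R M] :
    frk R M ≤ projMinRank R M ∧ projMinRank R M ≤ frk R M + d :=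
  frk_le_projMinRank_le_general d hd M
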